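/- Let G be a countable discrete group. If there exists a continuous linear functional m on ℓ∞(G)/ℝ such that m([h ↦ f(gh)] − [f]) = f(g) − f(e) for all g ∈ G and f ∈ ℓ∞(G), then there is no family (f_g)_{g ∈ G} of elements of ℓ∞(G) with Σ_{g ∈ G} ‖f_g‖_∞ < ∞ and Σ_{g ∈ G} (g·f_g − f_g) = 1 (sum converging in the supremum norm). (Concretely: vanishing of the Johnson class forces the non-vanishing of the fundamental class in ℓ¹-homology; this is the duality/pairing step of the main theorem.) -/

import Mathlib

noncomputable section
open scoped ENNReal

/-- `ℓ∞(G)`: the Banach space of bounded real-valued functions on `G` with the sup norm. -/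
abbrev Linf (G : Type*) : Type _ := ↥(lp (fun _ : G => ℝ) ∞)

/-- The left-translation action of `G` on `ℓ∞(G)`: `(g · f)(h) = f (g⁻¹ h)`. -/
def ltrans {G : Type*} [Group G] (g : G) (f : Linf G) : Linf G :=
  ⟨fun h => f (g⁻¹ * h),
    memℓp_infty ⟨‖f‖, by
      rintro x ⟨h, rfl⟩
      exact lp.norm_apply_le_norm ENNReal.top_ne_zero f (g⁻¹ * h)⟩⟩

/-- The constant function `1` as an element of `ℓ∞(G)`. -/
def lone (G : Type*) : Linf G :=
  ⟨fun _ => 1, memℓp_infty ⟨1, by rintro x ⟨h, rfl⟩; simp⟩⟩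

/-- The subspace of constant functions in `ℓ∞(G)` (the span of the constant function `1`). -/
def Consts (G : Type*) : Submodule ℝ (Linf G) := Submodule.span ℝ {lone G}

/-- Right translation: `(rt g f)(h) = f (g h)`, i.e. the function `h ↦ f (g h)`. -/
def rt {G : Type*} [Group G] (g : G) (f : Linf G) : Linf G :=
  ⟨fun h => f (g * h),
    memℓp_infty ⟨‖f‖, by
      rintro x ⟨h, rfl⟩
      exact lp.norm_apply_le_norm ENNReal.top_ne_zero f (g * h)⟩⟩

/-- Vanishing of the Johnson class forces non-vanishing of the fundamental class in
`ℓ¹`-homology: if some continuous linear functional `m` on `ℓ∞(G)/ℝ` satisfies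
`m([h ↦ f(gh)] − [f]) = f(g) − f(e)` for all `g, f`, then no family `(f_g)` in `ℓ∞(G)`
with `Σ_g ‖f_g‖_∞ < ∞` has `Σ_g (g·f_g − f_g) = 1` in the sup norm. -/
theorem no_ell_one_family_of_johnson_class_vanishes
    (G : Type*) [Group G] [Countable G]
    (m : (Linf G ⧸ Consts G) →L[ℝ] ℝ)
    (hm : ∀ (g : G) (f : Linf G),
      m (Submodule.Quotient.mk (rt g f) - Submodule.Quotient.mk f) = f g - f 1) :
    ¬ ∃ F : G → Linf G, Summable (fun g : G => ‖F g‖) ∧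
        HasSum (fun g : G => ltrans g (F g) - F g) (lone G) := by
  rintro ⟨F, -, hF⟩
  have hcont : Continuous fun f : Linf G => f 1 - m (Submodule.Quotient.mk f) := by
    refine Continuous.sub ?_ (m.continuous.comp continuous_quot_mk)
    have hL : LipschitzWith 1 fun f : Linf G => f 1 := by
      refine LipschitzWith.of_dist_le_mul fun f g => ?_
      rw [dist_eq_norm, dist_eq_norm]
      have h := lp.norm_apply_le_norm ENNReal.top_ne_zero (f - g) 1
      simpa using h
    exact hL.continuous
  let M : Linf G →+ ℝ :=
    { toFun := fun f => f 1 - m (Submodule.Quotient.mk f)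
      map_zero' := by simp
      map_add' := fun f g => by
        rw [Submodule.Quotient.mk_add, map_add, lp.coeFn_add, Pi.add_apply]
        ring }
  have h := hF.map M hcont
  have hz : (M ∘ fun g : G => ltrans g (F g) - F g) = fun _ => 0 := by
    funext g
    have h1 := hm g⁻¹ (F g)
    have h2 : ltrans g (F g) = rt g⁻¹ (F g) := rfl
    have h3 : (rt g⁻¹ (F g)) 1 = F g g⁻¹ := by
      change F g (g⁻¹ * 1) = _
      rw [mul_one]
    rw [map_sub] at h1
    change M (ltrans g (F g) - F g) = 0
    rw [map_sub, h2]
    change ((rt g⁻¹ (F g)) 1 - m _) - (F g 1 - m _) = 0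
    rw [h3]
    linarith
  have h1 : M (lone G) = 1 := by
    have h0 : (Submodule.Quotient.mk (lone G) : Linf G ⧸ Consts G) = 0 :=
      (Submodule.Quotient.mk_eq_zero _).2 (Submodule.subset_span rfl)
    change (1 : ℝ) - m (Submodule.Quotient.mk (lone G)) = 1
    rw [h0, map_zero, sub_zero]
  rw [hz, h1] at h
  exact zero_ne_one (hasSum_zero.unique h)
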